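/- For every FNM process p and all a, b ∈ L, the following laws of restriction hold up to structure-preserving bisimilarity: (νa)p ~sp p provided a ∉ fn(p) (remove); (νa)(νb)p ~sp (νb)(νa)p provided a ≠ b (reorder); and (νa)p ~sp (νb)(p{b/a}) provided b ∉ fn(p) ∪ bn(p) (alpha-conversion). -/

import Mathlib

/-- Actions of FNM: the invisible action τ, input actions `a ∈ L` and
output actions `ā ∈ L̄` (here `α` plays the role of the finite set `L`). -/
inductive Act (α : Type) where
  | tau : Act α
  | inp : α → Act α
  | out : α → Act α
  deriving DecidableEq

/-- (Open) FNM terms: `0`, the variable `x`, action prefixing `mu.t`, strong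
prefixing `a̲.s`, choice `s+s`, constants `C`, parallel `t|t` and
restriction `(νa)p`.  The syntactic categories are carved out below. -/
inductive FNM (α κ : Type) where
  | nil : FNM α κ
  | var : FNM α κ
  | pref : Act α → FNM α κ → FNM α κ
  | spref : α → FNM α κ → FNM α κ
  | sum : FNM α κ → FNM α κ → FNM α κ
  | const : κ → FNM α κ
  | par : FNM α κ → FNM α κ → FNM α κ
  | res : α → FNM α κ → FNM α κ
  deriving DecidableEq

namespace FNM

variable {α κ : Type}

mutual
  /-- Guarded terms: syntactic category `s ::= 0 | mu.t | a̲.s | s+s`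
  (with `t` restriction-free). -/
  def Grd : FNM α κ → Prop
    | .nil => True
    | .var => False
    | .pref _ t => RF t
    | .spref _ s => Grd s
    | .sum s1 s2 => Grd s1 ∧ Grd s2
    | .const _ => False
    | .par _ _ => False
    | .res _ _ => False
  /-- Restriction-free terms: syntactic category `t ::= q | t|t`, where
  `q ::= s | C | x` is the category of sequential terms. -/
  def RF : FNM α κ → Prop
    | .nil => True
    | .var => True
    | .pref _ t => RF t
    | .spref _ s => Grd s
    | .sum s1 s2 => Grd s1 ∧ Grd s2
    | .const _ => True
    | .par t1 t2 => RF t1 ∧ RF t2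
    | .res _ _ => False
end

/-- Sequential terms: `q ::= s | C | x`. -/
def Seq (t : FNM α κ) : Prop :=
  Grd t ∨ (∃ c, t = FNM.const c) ∨ t = FNM.var

/-- General terms: `p ::= t | (νa)p`. -/
def Gen : FNM α κ → Prop
  | .res _ p => Gen p
  | t => RF t

/-- Closed terms: no occurrence of the variable. -/
def VarFree : FNM α κ → Prop
  | .nil => True
  | .var => False
  | .pref _ t => VarFree t
  | .spref _ s => VarFree s
  | .sum s1 s2 => VarFree s1 ∧ VarFree s2
  | .const _ => True
  | .par t1 t2 => VarFree t1 ∧ VarFree t2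
  | .res _ p => VarFree p

/-- Substitution `p{r/x}` of the term `r` for every occurrence of the
variable `x` in `p` (constants are dealt with via the environment). -/
def subst (r : FNM α κ) : FNM α κ → FNM α κ
  | .nil => .nil
  | .var => r
  | .pref mu t => .pref mu (subst r t)
  | .spref a s => .spref a (subst r s)
  | .sum s1 s2 => .sum (subst r s1) (subst r s2)
  | .const c => .const c
  | .par t1 t2 => .par (subst r t1) (subst r t2)
  | .res a p => .res a (subst r p)

/-- `mu` uses the name `a`. -/
def _root_.Act.uses (a : α) : Act α → Prop
  | .tau => False
  | .inp b => b = a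
  | .out b => b = a

/-- `a` occurs free in a term (through an environment `env` giving the body
of each process constant). -/
inductive FreeIn (env : κ → FNM α κ) (a : α) : FNM α κ → Prop where
  | pref_act {mu : Act α} {t : FNM α κ} : mu.uses a → FreeIn env a (.pref mu t)
  | pref_cont {mu : Act α} {t : FNM α κ} : FreeIn env a t → FreeIn env a (.pref mu t)
  | spref_act {s : FNM α κ} : FreeIn env a (.spref a s)
  | spref_cont {b : α} {s : FNM α κ} : FreeIn env a s → FreeIn env a (.spref b s)
  | sum_l {s1 s2 : FNM α κ} : FreeIn env a s1 → FreeIn env a (.sum s1 s2)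
  | sum_r {s1 s2 : FNM α κ} : FreeIn env a s2 → FreeIn env a (.sum s1 s2)
  | par_l {t1 t2 : FNM α κ} : FreeIn env a t1 → FreeIn env a (.par t1 t2)
  | par_r {t1 t2 : FNM α κ} : FreeIn env a t2 → FreeIn env a (.par t1 t2)
  | res {b : α} {p : FNM α κ} : a ≠ b → FreeIn env a p → FreeIn env a (.res b p)
  | const {c : κ} : FreeIn env a (env c) → FreeIn env a (.const c)

/-- `a` occurs bound (by a restriction) in a term. -/
inductive BoundIn (env : κ → FNM α κ) (a : α) : FNM α κ → Prop where
  | res_here {p : FNM α κ} : BoundIn env a (.res a p)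
  | res_in {b : α} {p : FNM α κ} : BoundIn env a p → BoundIn env a (.res b p)
  | pref {mu : Act α} {t : FNM α κ} : BoundIn env a t → BoundIn env a (.pref mu t)
  | spref {b : α} {s : FNM α κ} : BoundIn env a s → BoundIn env a (.spref b s)
  | sum_l {s1 s2 : FNM α κ} : BoundIn env a s1 → BoundIn env a (.sum s1 s2)
  | sum_r {s1 s2 : FNM α κ} : BoundIn env a s2 → BoundIn env a (.sum s1 s2)
  | par_l {t1 t2 : FNM α κ} : BoundIn env a t1 → BoundIn env a (.par t1 t2)
  | par_r {t1 t2 : FNM α κ} : BoundIn env a t2 → BoundIn env a (.par t1 t2)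
  | const {c : κ} : BoundIn env a (env c) → BoundIn env a (.const c)

end FNM

/-- A place of the net `N_FNM`: a sequential (extended) term, rendered as a
pure sequential term together with the record `ρ : α → Bool` of which names
have been replaced by their restricted counterparts (`ρ a = true` represents
the substitution `{a'/a}`). -/
abbrev Place (α κ : Type) := FNM α κ × (α → Bool)

namespace FNM

variable {α κ : Type} [DecidableEq α] [DecidableEq κ] [Fintype α]

/-- The decomposition function `dec`, mapping (extended) terms to markings:
`dec(0) = θ`, `dec(p|q) = dec(p) ⊕ dec(q)`, `dec((νa)p) = dec(p){a'/a}`, and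
a sequential term other than `0` is mapped to a single place. -/
def dec (ρ : α → Bool) : FNM α κ → Multiset (Place α κ)
  | .nil => 0
  | .par t1 t2 => dec ρ t1 + dec ρ t2
  | .res a p => dec (Function.update ρ a true) p
  | t => {(t, ρ)}

end FNM

/-- Extended visible actions: inputs and outputs, possibly restricted
(`inp a true` represents `a'`, `out a false` represents `ā`, etc.). -/
inductive XAct (α : Type) where
  | inp : α → Bool → XAct α
  | out : α → Bool → XAct α

/-- Labels of net transitions: `τ` is the empty sequence, and otherwise a
sequence of extended actions. -/
abbrev Lbl (α : Type) := List (XAct α)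

/-- An extended action carries no restricted name. -/
def XAct.unres {α : Type} : XAct α → Prop
  | .inp _ r => r = false
  | .out _ r => r = false

/-- The label contributed by prefix `mu` under the restriction record `ρ`. -/
def actL {α : Type} (ρ : α → Bool) : Act α → Lbl α
  | .tau => []
  | .inp a => [XAct.inp a (ρ a)]
  | .out a => [XAct.out a (ρ a)]

/-- The synchronization relation `Sync(σ1, σ2, σ)`: `Sync(α, ᾱ, τ)`,
`Sync(aσ, ā, σ)` and `Sync(ā, aσ, σ)` for `σ ≠ ε` (also on restricted
actions). -/
inductive Sync {α : Type} : Lbl α → Lbl α → Lbl α → Prop where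
  | inout (a : α) (r : Bool) : Sync [XAct.inp a r] [XAct.out a r] []
  | outin (a : α) (r : Bool) : Sync [XAct.out a r] [XAct.inp a r] []
  | seqL (a : α) (r : Bool) (σ : Lbl α) :
      σ ≠ [] → Sync (XAct.inp a r :: σ) [XAct.out a r] σ
  | seqR (a : α) (r : Bool) (σ : Lbl α) :
      σ ≠ [] → Sync [XAct.out a r] (XAct.inp a r :: σ) σ

namespace FNM

variable {α κ : Type} [DecidableEq α] [DecidableEq κ] [Fintype α]

/-- A marking is admissible if for no name `a` both `a` and its restricted
counterpart `a'` occur free in it. -/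
def Adm (env : κ → FNM α κ) (m : Multiset (Place α κ)) : Prop :=
  ∀ a : α, ¬ ((∃ p ∈ m, FreeIn env a p.1 ∧ p.2 a = false) ∧
              (∃ p ∈ m, FreeIn env a p.1 ∧ p.2 a = true))

/-- The net transitions of `N_FNM`, generated by the rules (pref), (sum₁),
(sum₂), (cons), (s-pref) and (s-com). -/
inductive Tr (env : κ → FNM α κ) :
    Multiset (Place α κ) → Lbl α → Multiset (Place α κ) → Prop where
  | pref (ρ : α → Bool) (mu : Act α) (t : FNM α κ) :
      Tr env {(FNM.pref mu t, ρ)} (actL ρ mu) (dec ρ t)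
  | sum1 (ρ : α → Bool) (s1 s2 : FNM α κ) (σ : Lbl α) (m : Multiset (Place α κ)) :
      Tr env (dec ρ s1) σ m → Tr env {(FNM.sum s1 s2, ρ)} σ m
  | sum2 (ρ : α → Bool) (s1 s2 : FNM α κ) (σ : Lbl α) (m : Multiset (Place α κ)) :
      Tr env (dec ρ s2) σ m → Tr env {(FNM.sum s1 s2, ρ)} σ m
  | cons (ρ : α → Bool) (c : κ) (σ : Lbl α) (m : Multiset (Place α κ)) :
      Tr env (dec ρ (env c)) σ m → Tr env {(FNM.const c, ρ)} σ m
  | spref (ρ : α → Bool) (a : α) (s : FNM α κ) (σ : Lbl α) (m : Multiset (Place α κ)) :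
      Tr env (dec ρ s) σ m →
      Tr env {(FNM.spref a s, ρ)} (XAct.inp a (ρ a) :: σ) m
  | scom (m1 m2 m1' m2' : Multiset (Place α κ)) (σ1 σ2 σ : Lbl α) :
      Tr env m1 σ1 m1' → Tr env m2 σ2 m2' →
      Adm env (m1 + m2) → Sync σ1 σ2 σ →
      Tr env (m1 + m2) σ (m1' + m2')

/-- Tritions of the net `N_FNM`: only those whose label contains no
restricted action are kept. -/
def NetTr (env : κ → FNM α κ) (m : Multiset (Place α κ)) (σ : Lbl α)
    (m' : Multiset (Place α κ)) : Prop :=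
  Tr env m σ m' ∧ ∀ x ∈ σ, x.unres

/-- First projection of a linking. -/
def pi1 (l : Multiset (Place α κ × Place α κ)) : Multiset (Place α κ) :=
  l.map Prod.fst

/-- Second projection of a linking. -/
def pi2 (l : Multiset (Place α κ × Place α κ)) : Multiset (Place α κ) :=
  l.map Prod.snd

/-- Structure-preserving bisimulation on the net `N_FNM`. -/
def IsSPB (env : κ → FNM α κ) (R : Set (Multiset (Place α κ × Place α κ))) : Prop :=
  ∀ l ∈ R, ∀ c ≤ l,
    (∀ σ m1, NetTr env (pi1 c) σ m1 →
      ∃ m2 cb, NetTr env (pi2 c) σ m2 ∧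
        pi1 cb = m1 ∧ pi2 cb = m2 ∧ l - c + cb ∈ R) ∧
    (∀ σ m2, NetTr env (pi2 c) σ m2 →
      ∃ m1 cb, NetTr env (pi1 c) σ m1 ∧
        pi1 cb = m1 ∧ pi2 cb = m2 ∧ l - c + cb ∈ R)

/-- `p ~sp q`: some structure-preserving bisimulation contains a linking
projecting on `dec(p)` and `dec(q)`. -/
def SPEq (env : κ → FNM α κ) (p q : FNM α κ) : Prop :=
  ∃ R, IsSPB env R ∧ ∃ l ∈ R,
    pi1 l = dec (fun _ => false) p ∧ pi2 l = dec (fun _ => false) q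

end FNM

namespace FNM

variable {α κ : Type} [DecidableEq α]

/-- Renaming of name `a` to `b` in an action. -/
def _root_.Act.ren (a b : α) : Act α → Act α
  | .tau => .tau
  | .inp c => .inp (if c = a then b else c)
  | .out c => .out (if c = a then b else c)

/-- The syntactic substitution `p{b/a}` of action `b` for action `a`: free
occurrences of `a` are renamed to `b` (renaming stops under a binder `(νa)`);
each constant `C` occurring in the term is replaced by its renamed
counterpart `f C` (whose defining body must be the renamed body of `C`, as
required in the hypotheses of the alpha-conversion law below). -/
def renName (f : κ → κ) (a b : α) : FNM α κ → FNM α κ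
  | .nil => .nil
  | .var => .var
  | .pref mu t => .pref (mu.ren a b) (renName f a b t)
  | .spref c s => .spref (if c = a then b else c) (renName f a b s)
  | .sum s1 s2 => .sum (renName f a b s1) (renName f a b s2)
  | .const c => .const (f c)
  | .par t1 t2 => .par (renName f a b t1) (renName f a b t2)
  | .res c p => if c = a then .res c p else .res c (renName f a b p)

end FNM

/-!
A place is a term together with the record of the names that have been restricted, and all places
of `dec ρ p` carry the same record when `p` is a general term. The two sides of each law therefore
decompose into the same places up to a permutation `θ` of the names that fixes the free names:
`θ = 1` for (remove) and (reorder), where the records agree on the names that matter, and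
`θ = swap a b` for (alpha-conversion), unless `p` binds `a`; then `p{b/a} = p` and `θ = 1` again.
Relating two places when the second is obtained from the first along `θ` yields a relation whose
additive closure is preserved by every transition. The labels are renamed along `θ` too, but only
in their restricted actions, so that the labels kept in `N_FNM` do not change. Unlike
`p ↦ p{b/a}`, a permutation is invertible, which makes the construction symmetric in the two sides.
-/

/-- The action obtained by applying `g` to the name of `mu`. -/
def Act.map {α β : Type} (g : α → β) : Act α → Act β
  | .tau => .tau
  | .inp x => .inp (g x)
  | .out x => .out (g x)

/-- The extended action obtained by applying `g` to the name of a restricted action; unrestricted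
actions are left alone, since restricted names are the only ones that may be alpha-converted. -/
def XAct.mapRestricted {α : Type} (g : α → α) : XAct α → XAct α
  | .inp x true => .inp (g x) true
  | .inp x false => .inp x false
  | .out x true => .out (g x) true
  | .out x false => .out x false

theorem Act.map_map {α β γ : Type} (g : β → γ) (h : α → β) (mu : Act α) :
    (mu.map h).map g = mu.map (g ∘ h) := by
  cases mu <;> rfl

theorem Act.map_id {α : Type} (mu : Act α) : mu.map id = mu := by
  cases mu <;> rfl

theorem Act.uses.map {α β : Type} {x : α} {mu : Act α} (h : mu.uses x) (g : α → β) :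
    (mu.map g).uses (g x) := by
  cases mu with
  | tau => exact h
  | inp y => exact congrArg g h
  | out y => exact congrArg g h

theorem swap_apply_of_ne_right {α : Type*} [DecidableEq α] {a b x : α} (h : x ≠ b) :
    Equiv.swap a b x = if x = a then b else x := by
  rw [Equiv.swap_apply_def, if_neg h]

theorem Act.map_swap_of_not_uses {α : Type} [DecidableEq α] {a b : α} {mu : Act α}
    (h : ¬ mu.uses b) : mu.map (Equiv.swap a b) = mu.ren a b := by
  cases mu with
  | tau => rfl
  | inp x => exact congrArg Act.inp (swap_apply_of_ne_right h)
  | out x => exact congrArg Act.out (swap_apply_of_ne_right h)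

theorem XAct.mapRestricted_of_unres {α : Type} (g : α → α) {x : XAct α} (h : x.unres) :
    x.mapRestricted g = x := by
  rcases x with ⟨x, _ | _⟩ | ⟨x, _ | _⟩ <;> simp_all [XAct.unres, XAct.mapRestricted]

theorem map_mapRestricted_of_unres {α : Type} (g : α → α) {σ : Lbl α} (h : ∀ x ∈ σ, x.unres) :
    σ.map (XAct.mapRestricted g) = σ :=
  (List.map_congr_left fun x hx => XAct.mapRestricted_of_unres g (h x hx)).trans (List.map_id σ)

theorem Sync.mapRestricted {α : Type} (g : α → α) {σ₁ σ₂ σ : Lbl α} (h : Sync σ₁ σ₂ σ) :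
    Sync (σ₁.map (XAct.mapRestricted g)) (σ₂.map (XAct.mapRestricted g))
      (σ.map (XAct.mapRestricted g)) := by
  cases h with
  | inout x r => cases r <;> exact .inout _ _
  | outin x r => cases r <;> exact .outin _ _
  | seqL x r _ hσ => cases r <;> exact .seqL _ _ _ (by simpa using hσ)
  | seqR x r _ hσ => cases r <;> exact .seqR _ _ _ (by simpa using hσ)

namespace FNM

variable {α κ : Type} {env : κ → FNM α κ}

section PlaceSimulation

variable {P : Place α κ → Place α κ → Prop}

theorem rel_iff_exists_linking {m n : Multiset (Place α κ)} :
    Multiset.Rel P m n ↔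
      ∃ l : Multiset (Place α κ × Place α κ), (∀ q ∈ l, P q.1 q.2) ∧ pi1 l = m ∧ pi2 l = n := by
  constructor
  · intro h
    induction h with
    | zero => exact ⟨0, by simp, rfl, rfl⟩
    | @cons p q m n hpq _ ih =>
      obtain ⟨l, hl, rfl, rfl⟩ := ih
      exact ⟨(p, q) ::ₘ l, by simpa using ⟨hpq, by simpa using hl⟩,
        Multiset.map_cons _ _ _, Multiset.map_cons _ _ _⟩
  · rintro ⟨l, hl, rfl, rfl⟩
    exact Multiset.rel_map.2 (Multiset.rel_refl_of_refl_on hl)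

variable [DecidableEq α]

/-- `P` is a place simulation: its additive closure, which is `Multiset.Rel P`, is a simulation
on the markings of `N_FNM`. -/
def IsPlaceSimulation (env : κ → FNM α κ) (P : Place α κ → Place α κ → Prop) : Prop :=
  ∀ ⦃m n m' : Multiset (Place α κ)⦄ ⦃σ : Lbl α⦄, Multiset.Rel P m n → NetTr env m σ m' →
    ∃ n', NetTr env n σ n' ∧ Multiset.Rel P m' n'

theorem IsPlaceSimulation.isSPB [DecidableEq κ] [Fintype α] (h : IsPlaceSimulation env P)
    (h_flip : IsPlaceSimulation env (flip P)) : IsSPB env {l | ∀ q ∈ l, P q.1 q.2} := by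
  intro l hl c hcl
  have hc : Multiset.Rel P (pi1 c) (pi2 c) :=
    rel_iff_exists_linking.2 ⟨c, fun q hq => hl q (Multiset.mem_of_le hcl hq), rfl, rfl⟩
  have update_mem (d : Multiset (Place α κ × Place α κ)) (hd : ∀ q ∈ d, P q.1 q.2) :
      ∀ q ∈ l - c + d, P q.1 q.2 := fun q hq =>
    (Multiset.mem_add.1 hq).elim (fun hq => hl q (Multiset.mem_of_le tsub_le_self hq)) (hd q)
  constructor
  · intro σ m₁ ht
    obtain ⟨m₂, ht₂, hrel⟩ := h hc ht
    obtain ⟨d, hd, hd₁, hd₂⟩ := rel_iff_exists_linking.1 hrel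
    exact ⟨m₂, d, ht₂, hd₁, hd₂, update_mem d hd⟩
  · intro σ m₂ ht
    obtain ⟨m₁, ht₁, hrel⟩ := h_flip (Multiset.rel_flip.2 hc) ht
    obtain ⟨d, hd, hd₁, hd₂⟩ := rel_iff_exists_linking.1 (Multiset.rel_flip.1 hrel)
    exact ⟨m₁, d, ht₁, hd₁, hd₂, update_mem d hd⟩

theorem IsPlaceSimulation.spEq [DecidableEq κ] [Fintype α] {p q : FNM α κ}
    (h : IsPlaceSimulation env P) (h_flip : IsPlaceSimulation env (flip P))
    (hpq : Multiset.Rel P (dec (fun _ => false) p) (dec (fun _ => false) q)) : SPEq env p q :=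
  ⟨_, h.isSPB h_flip, rel_iff_exists_linking.1 hpq⟩

end PlaceSimulation

section Renaming

variable {θ : Equiv.Perm α} {K : κ → κ → Prop} {ρ ρ' : α → Bool} {t t' : FNM α κ}

/-- `Renamed θ K t t'`: the term `t'` is obtained from `t` by applying `θ` to all names, bound ones
included, and by replacing each occurrence of a constant by a `K`-related one. -/
inductive Renamed (θ : Equiv.Perm α) (K : κ → κ → Prop) : FNM α κ → FNM α κ → Prop where
  | nil : Renamed θ K .nil .nil
  | var : Renamed θ K .var .var
  | pref (mu : Act α) {t t' : FNM α κ} :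
      Renamed θ K t t' → Renamed θ K (.pref mu t) (.pref (mu.map θ) t')
  | spref (x : α) {t t' : FNM α κ} : Renamed θ K t t' → Renamed θ K (.spref x t) (.spref (θ x) t')
  | sum {s s' t t' : FNM α κ} :
      Renamed θ K s s' → Renamed θ K t t' → Renamed θ K (.sum s t) (.sum s' t')
  | const {c d : κ} : K c d → Renamed θ K (.const c) (.const d)
  | par {s s' t t' : FNM α κ} :
      Renamed θ K s s' → Renamed θ K t t' → Renamed θ K (.par s t) (.par s' t')
  | res (x : α) {t t' : FNM α κ} : Renamed θ K t t' → Renamed θ K (.res x t) (.res (θ x) t')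

theorem Renamed.refl (t : FNM α κ) : Renamed 1 Eq t t := by
  induction t with
  | nil => exact .nil
  | var => exact .var
  | pref mu _ ih => simpa [Act.map_id] using ih.pref mu
  | spref x _ ih => exact ih.spref x
  | sum _ _ ih₁ ih₂ => exact ih₁.sum ih₂
  | const c => exact .const rfl
  | par _ _ ih₁ ih₂ => exact ih₁.par ih₂
  | res x _ ih => exact ih.res x

theorem Renamed.symm (h : Renamed θ K t t') : Renamed θ⁻¹ (flip K) t' t := by
  induction h with
  | nil => exact .nil
  | var => exact .var
  | pref mu _ ih => simpa [Act.map_map, Act.map_id] using ih.pref (mu.map θ)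
  | spref x _ ih => simpa using ih.spref (θ x)
  | sum _ _ ih₁ ih₂ => exact ih₁.sum ih₂
  | const h => exact .const h
  | par _ _ ih₁ ih₂ => exact ih₁.par ih₂
  | res x _ ih => simpa using ih.res (θ x)

/-- `K` relates constants whose defining bodies are renamed along `θ` and `K` itself. -/
def IsConstRenaming (env : κ → FNM α κ) (θ : Equiv.Perm α) (K : κ → κ → Prop) : Prop :=
  ∀ ⦃c d : κ⦄, K c d → Renamed θ K (env c) (env d)

theorem isConstRenaming_one_eq : IsConstRenaming env 1 Eq := by
  rintro c _ rfl
  exact .refl _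

theorem IsConstRenaming.symm (hK : IsConstRenaming env θ K) :
    IsConstRenaming env θ⁻¹ (flip K) :=
  fun _ _ hcd => (hK hcd).symm

theorem FreeIn.ne_of_not_freeIn {x y : α} (hx : FreeIn env x t) (hy : ¬ FreeIn env y t) :
    x ≠ y := by
  rintro rfl
  exact hy hx

theorem FreeIn.renamed (hK : IsConstRenaming env θ K) {x : α} (hx : FreeIn env x t)
    (h : Renamed θ K t t') : FreeIn env (θ x) t' := by
  induction hx generalizing t' with
  | pref_act hu => cases h with | pref _ _ => exact .pref_act (hu.map θ)
  | pref_cont _ ih => cases h with | pref _ h => exact .pref_cont (ih h)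
  | spref_act => cases h with | spref _ _ => exact .spref_act
  | spref_cont _ ih => cases h with | spref _ h => exact .spref_cont (ih h)
  | sum_l _ ih => cases h with | sum h _ => exact .sum_l (ih h)
  | sum_r _ ih => cases h with | sum _ h => exact .sum_r (ih h)
  | par_l _ ih => cases h with | par h _ => exact .par_l (ih h)
  | par_r _ ih => cases h with | par _ h => exact .par_r (ih h)
  | res hne _ ih => cases h with | res _ h => exact .res (θ.injective.ne hne) (ih h)
  | const _ ih => cases h with | const h => exact .const (ih (hK h))

/-- The name `x` under the record `ρ` corresponds to the name `θ x` under `ρ'`: they have the same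
restriction status, and `θ` fixes `x` unless it is restricted. -/
def AgreeAt (θ : Equiv.Perm α) (ρ ρ' : α → Bool) (x : α) : Prop :=
  ρ' (θ x) = ρ x ∧ (ρ x = false → θ x = x)

theorem AgreeAt.symm {x : α} (h : AgreeAt θ ρ ρ' x) : AgreeAt θ⁻¹ ρ' ρ (θ x) := by
  refine ⟨by simpa using h.1.symm, fun hx => ?_⟩
  simpa using (h.2 (h.1.symm.trans hx)).symm

theorem AgreeAt.update [DecidableEq α] {x c : α} (h : x ≠ c → AgreeAt θ ρ ρ' x) :
    AgreeAt θ (Function.update ρ c true) (Function.update ρ' (θ c) true) x := by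
  by_cases hx : x = c
  · simp [hx, AgreeAt]
  · simpa [hx, AgreeAt] using h hx

theorem AgreeAt.inp {x : α} (h : AgreeAt θ ρ ρ' x) :
    (XAct.inp x (ρ x)).mapRestricted θ = .inp (θ x) (ρ' (θ x)) := by
  obtain ⟨hρ, hθ⟩ := h
  cases hx : ρ x <;> simp_all [XAct.mapRestricted]

theorem AgreeAt.out {x : α} (h : AgreeAt θ ρ ρ' x) :
    (XAct.out x (ρ x)).mapRestricted θ = .out (θ x) (ρ' (θ x)) := by
  obtain ⟨hρ, hθ⟩ := h
  cases hx : ρ x <;> simp_all [XAct.mapRestricted]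

theorem actL_map {mu : Act α} (h : ∀ x, mu.uses x → AgreeAt θ ρ ρ' x) :
    (actL ρ mu).map (XAct.mapRestricted θ) = actL ρ' (mu.map θ) := by
  cases mu with
  | tau => rfl
  | inp x => exact congrArg ([·]) (h x rfl).inp
  | out x => exact congrArg ([·]) (h x rfl).out

/-- The place `q` is obtained from `p` by renaming its term along `θ` and `K` and by transporting
along `θ` the restriction record of its free names. -/
structure RenamedPlace (env : κ → FNM α κ) (θ : Equiv.Perm α) (K : κ → κ → Prop)
    (p q : Place α κ) : Prop where
  renamed : Renamed θ K p.1 q.1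
  agree : ∀ x, FreeIn env x p.1 → AgreeAt θ p.2 q.2 x

theorem RenamedPlace.symm (hK : IsConstRenaming env θ K) {p q : Place α κ}
    (h : RenamedPlace env θ K p q) : RenamedPlace env θ⁻¹ (flip K) q p := by
  refine ⟨h.renamed.symm, fun y hy => ?_⟩
  simpa using (h.agree _ (hy.renamed hK.symm h.renamed.symm)).symm

theorem flip_renamedPlace (hK : IsConstRenaming env θ K) :
    flip (RenamedPlace env θ K) = RenamedPlace env θ⁻¹ (flip K) := by
  funext p q
  exact propext ⟨.symm hK, fun h => h.symm hK.symm⟩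

theorem Adm.of_rel (hK : IsConstRenaming env θ K) {m n : Multiset (Place α κ)}
    (hadm : Adm env m) (h : Multiset.Rel (RenamedPlace env θ K) m n) : Adm env n := by
  have pull_back (y : α) (r : Bool) : (∃ q ∈ n, FreeIn env y q.1 ∧ q.2 y = r) →
      ∃ p ∈ m, FreeIn env (θ⁻¹ y) p.1 ∧ p.2 (θ⁻¹ y) = r := by
    rintro ⟨q, hq, hfree, hr⟩
    obtain ⟨p, hp, hqp⟩ := Multiset.exists_mem_of_rel_of_mem (Multiset.rel_flip.2 h) hq
    have hqp := RenamedPlace.symm hK hqp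
    exact ⟨p, hp, hfree.renamed hK.symm hqp.renamed, (hqp.agree y hfree).1.trans hr⟩
  exact fun y hy => hadm (θ⁻¹ y) (hy.imp (pull_back y _) (pull_back y _))

theorem exists_of_rel_singleton {n : Multiset (Place α κ)}
    (h : Multiset.Rel (RenamedPlace env θ K) {(t, ρ)} n) :
    ∃ t' ρ', n = {(t', ρ')} ∧ Renamed θ K t t' ∧ ∀ x, FreeIn env x t → AgreeAt θ ρ ρ' x := by
  obtain ⟨⟨t', ρ'⟩, n', hp, hn', rfl⟩ := Multiset.rel_cons_left.1 h
  obtain rfl := Multiset.rel_zero_left.1 hn'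
  exact ⟨t', ρ', rfl, hp.renamed, hp.agree⟩

variable [DecidableEq α]

theorem Renamed.rel_dec (h : Renamed θ K t t') (hρ : ∀ x, FreeIn env x t → AgreeAt θ ρ ρ' x) :
    Multiset.Rel (RenamedPlace env θ K) (dec ρ t) (dec ρ' t') := by
  induction h generalizing ρ ρ' with
  | nil => exact .zero
  | par _ _ ih₁ ih₂ =>
    exact (ih₁ fun x hx => hρ x (.par_l hx)).add (ih₂ fun x hx => hρ x (.par_r hx))
  | res c _ ih => exact ih fun x hx => .update fun hne => hρ x (.res hne hx)
  | var => exact .cons ⟨.var, hρ⟩ .zero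
  | pref mu h => exact .cons ⟨h.pref mu, hρ⟩ .zero
  | spref x h => exact .cons ⟨h.spref x, hρ⟩ .zero
  | sum h₁ h₂ => exact .cons ⟨h₁.sum h₂, hρ⟩ .zero
  | const h => exact .cons ⟨.const h, hρ⟩ .zero

theorem Tr.renamed (hK : IsConstRenaming env θ K) {m n m' : Multiset (Place α κ)} {σ : Lbl α}
    (ht : Tr env m σ m') (h : Multiset.Rel (RenamedPlace env θ K) m n) :
    ∃ n', Tr env n (σ.map (XAct.mapRestricted θ)) n' ∧
      Multiset.Rel (RenamedPlace env θ K) m' n' := by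
  induction ht generalizing n with
  | pref ρ mu t =>
    obtain ⟨_, ρ', rfl, hren, hρ⟩ := exists_of_rel_singleton h
    cases hren with | pref _ ht =>
      rw [actL_map fun x hx => hρ x (.pref_act hx)]
      exact ⟨_, .pref _ _ _, ht.rel_dec fun x hx => hρ x (.pref_cont hx)⟩
  | sum1 ρ s₁ s₂ σ m _ ih =>
    obtain ⟨_, ρ', rfl, hren, hρ⟩ := exists_of_rel_singleton h
    cases hren with | sum h₁ _ =>
      obtain ⟨n', ht', h'⟩ := ih (h₁.rel_dec fun x hx => hρ x (.sum_l hx))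
      exact ⟨n', .sum1 _ _ _ _ _ ht', h'⟩
  | sum2 ρ s₁ s₂ σ m _ ih =>
    obtain ⟨_, ρ', rfl, hren, hρ⟩ := exists_of_rel_singleton h
    cases hren with | sum _ h₂ =>
      obtain ⟨n', ht', h'⟩ := ih (h₂.rel_dec fun x hx => hρ x (.sum_r hx))
      exact ⟨n', .sum2 _ _ _ _ _ ht', h'⟩
  | cons ρ c σ m _ ih =>
    obtain ⟨_, ρ', rfl, hren, hρ⟩ := exists_of_rel_singleton h
    cases hren with | const hcd =>
      obtain ⟨n', ht', h'⟩ := ih ((hK hcd).rel_dec fun x hx => hρ x (.const hx))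
      exact ⟨n', .cons _ _ _ _ ht', h'⟩
  | spref ρ a s σ m _ ih =>
    obtain ⟨_, ρ', rfl, hren, hρ⟩ := exists_of_rel_singleton h
    cases hren with | spref _ hs =>
      obtain ⟨n', ht', h'⟩ := ih (hs.rel_dec fun x hx => hρ x (.spref_cont hx))
      rw [List.map_cons, (hρ a .spref_act).inp]
      exact ⟨n', .spref _ _ _ _ _ ht', h'⟩
  | scom m₁ m₂ m₁' m₂' σ₁ σ₂ σ _ _ hadm hsync ih₁ ih₂ =>
    have hadm' := hadm.of_rel hK h
    obtain ⟨n₁, n₂, h₁, h₂, rfl⟩ := Multiset.rel_add_left.1 h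
    obtain ⟨n₁', ht₁, h₁'⟩ := ih₁ h₁
    obtain ⟨n₂', ht₂, h₂'⟩ := ih₂ h₂
    exact ⟨n₁' + n₂', .scom _ _ _ _ _ _ _ ht₁ ht₂ hadm' (hsync.mapRestricted θ), h₁'.add h₂'⟩

theorem isPlaceSimulation_renamedPlace (hK : IsConstRenaming env θ K) :
    IsPlaceSimulation env (RenamedPlace env θ K) := by
  rintro m n m' σ h ⟨ht, hσ⟩
  obtain ⟨n', ht', h'⟩ := ht.renamed hK h
  rw [map_mapRestricted_of_unres θ hσ] at ht'
  exact ⟨n', ⟨ht', hσ⟩, h'⟩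

variable [DecidableEq κ] [Fintype α]

theorem spEq_of_rel_dec (hK : IsConstRenaming env θ K) {p q : FNM α κ}
    (h : Multiset.Rel (RenamedPlace env θ K) (dec (fun _ => false) p) (dec (fun _ => false) q)) :
    SPEq env p q := by
  refine (isPlaceSimulation_renamedPlace hK).spEq ?_ h
  rw [flip_renamedPlace hK]
  exact isPlaceSimulation_renamedPlace hK.symm

theorem Renamed.spEq (hK : IsConstRenaming env θ K) {p q : FNM α κ} (h : Renamed θ K p q)
    (hθ : ∀ x, FreeIn env x p → θ x = x) : SPEq env p q :=
  spEq_of_rel_dec hK (h.rel_dec fun x hx => ⟨rfl, fun _ => hθ x hx⟩)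

theorem spEq_of_dec_eq {p q : FNM α κ} (hp : dec (fun _ => false) p = dec ρ t)
    (hq : dec (fun _ => false) q = dec ρ' t) (hρ : ∀ x, FreeIn env x t → ρ' x = ρ x) :
    SPEq env p q := by
  refine spEq_of_rel_dec isConstRenaming_one_eq ?_
  rw [hp, hq]
  exact (Renamed.refl t).rel_dec fun x hx => ⟨hρ x hx, fun _ => rfl⟩

end Renaming

section Substitution

variable {f : κ → κ} {a b : α}

theorem Grd.rf {s : FNM α κ} (h : Grd s) : RF s := by
  cases s <;> simp_all [Grd, RF]

variable [DecidableEq α]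

/-- The correspondence `C ↦ f C` between the constants of `p` and those of `p{b/a}`, limited to the
constants in which `b` is not free: on the others `swap a b` differs from the substitution. -/
def FreshConst (env : κ → FNM α κ) (f : κ → κ) (b : α) (c d : κ) : Prop :=
  d = f c ∧ ¬ FreeIn env b (.const c)

theorem RF.renamed_renName {t : FNM α κ} (ht : RF t) (hb : ¬ FreeIn env b t) :
    Renamed (Equiv.swap a b) (FreshConst env f b) t (renName f a b t) := by
  induction t with
  | nil => exact .nil
  | var => exact .var
  | pref mu t ih =>
    rw [renName, ← Act.map_swap_of_not_uses fun hu => hb (.pref_act hu)]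
    exact (ih (by simpa only [RF] using ht) fun h => hb (.pref_cont h)).pref mu
  | spref x s ih =>
    have hxb : x ≠ b := by
      rintro rfl
      exact hb .spref_act
    simp only [RF] at ht
    rw [renName, ← swap_apply_of_ne_right hxb]
    exact (ih ht.rf fun h => hb (.spref_cont h)).spref x
  | sum s₁ s₂ ih₁ ih₂ =>
    simp only [RF] at ht
    exact (ih₁ ht.1.rf fun h => hb (.sum_l h)).sum (ih₂ ht.2.rf fun h => hb (.sum_r h))
  | const c => exact .const ⟨rfl, hb⟩
  | par t₁ t₂ ih₁ ih₂ =>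
    simp only [RF] at ht
    exact (ih₁ ht.1 fun h => hb (.par_l h)).par (ih₂ ht.2 fun h => hb (.par_r h))
  | res => simp [RF] at ht

theorem isConstRenaming_freshConst (henv : ∀ c, RF (env c))
    (hf : ∀ c, env (f c) = renName f a b (env c)) :
    IsConstRenaming env (Equiv.swap a b) (FreshConst env f b) := by
  rintro c _ ⟨rfl, hb⟩
  rw [hf]
  exact (henv c).renamed_renName fun h => hb (.const h)

theorem Gen.renName_eq_self_or_renamed (f : κ → κ) (a : α) {p : FNM α κ} (hp : Gen p)
    (hb : ¬ FreeIn env b p) (hb' : ¬ BoundIn env b p) :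
    (renName f a b p = p ∧ ¬ FreeIn env a p) ∨
      Renamed (Equiv.swap a b) (FreshConst env f b) p (renName f a b p) := by
  induction p with
  | res c p ih =>
    have hcb : c ≠ b := by
      rintro rfl
      exact hb' .res_here
    by_cases hca : c = a
    · subst hca
      exact .inl ⟨by simp [renName], by rintro (_ | _); contradiction⟩
    rw [renName, if_neg hca]
    rcases ih (by simpa only [Gen] using hp) (fun h => hb (.res hcb.symm h))
      (fun h => hb' (.res_in h)) with ⟨heq, ha⟩ | h
    · exact .inl ⟨by rw [heq], by rintro (_ | _); contradiction⟩
    · refine .inr ?_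
      simpa [Equiv.swap_apply_of_ne_of_ne hca hcb] using h.res c
  | _ => exact .inr (RF.renamed_renName (by simpa only [Gen] using hp) hb)

end Substitution

section RestrictionLaws

variable [DecidableEq α] [DecidableEq κ] [Fintype α] {a b : α} {p : FNM α κ}

theorem spEq_res_of_not_freeIn (ha : ¬ FreeIn env a p) : SPEq env (.res a p) p :=
  spEq_of_dec_eq (t := p) rfl rfl fun _ hx => by
    rw [Function.update_of_ne (hx.ne_of_not_freeIn ha)]

theorem spEq_res_res_of_not_freeIn (ha : ¬ FreeIn env a p) (hb : ¬ FreeIn env b p) :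
    SPEq env (.res a p) (.res b p) := by
  refine spEq_of_dec_eq (t := p) rfl rfl fun x hx => ?_
  simp only [Function.update_of_ne (hx.ne_of_not_freeIn ha),
    Function.update_of_ne (hx.ne_of_not_freeIn hb)]

theorem spEq_res_comm (env : κ → FNM α κ) (a b : α) (p : FNM α κ) :
    SPEq env (.res a (.res b p)) (.res b (.res a p)) := by
  refine spEq_of_dec_eq (t := p) rfl rfl fun x _ => ?_
  simp only [Function.update_apply]
  split_ifs <;> rfl

theorem spEq_res_renName (henv : ∀ c, RF (env c)) (hp : Gen p) {f : κ → κ}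
    (hf : ∀ c, env (f c) = renName f a b (env c)) (hb : ¬ FreeIn env b p)
    (hb' : ¬ BoundIn env b p) : SPEq env (.res a p) (.res b (renName f a b p)) := by
  rcases hp.renName_eq_self_or_renamed f a hb hb' with ⟨heq, ha⟩ | h
  · rw [heq]
    exact spEq_res_res_of_not_freeIn ha hb
  · have hres : Renamed (Equiv.swap a b) (FreshConst env f b) (.res a p)
        (.res b (renName f a b p)) := by simpa using h.res a
    refine hres.spEq (isConstRenaming_freshConst henv hf) fun x hx => ?_
    obtain ⟨hxa, hx⟩ : x ≠ a ∧ FreeIn env x p := by cases hx; constructor <;> assumption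
    exact Equiv.swap_apply_of_ne_of_ne hxa (hx.ne_of_not_freeIn hb)

end RestrictionLaws

end FNM

open FNM in
theorem speq_restriction_laws_general {α κ : Type} [DecidableEq α] [DecidableEq κ] [Fintype α]
    (env : κ → FNM α κ) (henv : ∀ c, RF (env c)) (p : FNM α κ) (hp : Gen p) (a b : α) :
    (¬ FreeIn env a p → SPEq env (.res a p) p) ∧
    SPEq env (.res a (.res b p)) (.res b (.res a p)) ∧
    (∀ f : κ → κ, (∀ c, env (f c) = renName f a b (env c)) →
      ¬ FreeIn env b p → ¬ BoundIn env b p →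
      SPEq env (.res a p) (.res b (renName f a b p))) :=
  ⟨spEq_res_of_not_freeIn, spEq_res_comm env a b p, fun _ hf => spEq_res_renName henv hp hf⟩

open FNM in
/-- laws of the restriction operator, up to
structure-preserving bisimilarity: (remove) `(νa)p ~sp p` if `a ∉ fn(p)`;
(reorder) `(νa)(νb)p ~sp (νb)(νa)p` if `a ≠ b`; (alpha-conversion)
`(νa)p ~sp (νb)(p{b/a})` if `b ∉ fn(p) ∪ bn(p)`. -/
theorem speq_restriction_laws {α κ : Type} [DecidableEq α] [DecidableEq κ]
    [Fintype α] [Finite κ]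
    (env : κ → FNM α κ) (henv : ∀ c, Grd (env c) ∧ VarFree (env c))
    (p : FNM α κ) (hp : Gen p) (hpv : VarFree p) (a b : α) :
    (¬ FreeIn env a p → SPEq env (FNM.res a p) p) ∧
    (a ≠ b → SPEq env (FNM.res a (FNM.res b p)) (FNM.res b (FNM.res a p))) ∧
    (∀ f : κ → κ, (∀ c, env (f c) = renName f a b (env c)) →
      ¬ FreeIn env b p → ¬ BoundIn env b p →
      SPEq env (FNM.res a p) (FNM.res b (renName f a b p))) := by
  obtain ⟨hremove, hreorder, halpha⟩ :=
    speq_restriction_laws_general env (fun c => (henv c).1.rf) p hp a b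
  exact ⟨hremove, fun _ => hreorder, halpha⟩
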